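/- Assume Π⁺ is continuous, and assume that for each integer N ≥ 1 equation (E) with parameter N has a unique continuous nondecreasing solution F_N with values in (m, M), and that equation (E∞) has at most one continuous nondecreasing solution with values in (m, M). Then the pointwise limit F_∞(x) := lim_{N→∞} F_N(x) exists for every x ∈ ℝ and F_∞ solves (E∞). Moreover, for every v ∈ (m, M), the aggregate expected profit π_N(v) := F_N⁻¹(v)·N·∫₀¹ (v − F_N(y·F_N⁻¹(v)))·y^{N−1} dy tends to 0 as N → ∞. -/

import Mathlib

open MeasureTheory Filter Set

/-- Centered Gaussian density with variance `σ²`. -/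
noncomputable def gq (σ z : ℝ) : ℝ :=
  Real.exp (-(z ^ 2) / (2 * σ ^ 2)) / (σ * Real.sqrt (2 * Real.pi))

/-- The averaged kernel `q̄(σ,x,z)`. -/
noncomputable def gqbar (σ x z : ℝ) : ℝ :=
  if x = 0 then gq σ z else (1 / x) * ∫ y in (0:ℝ)..x, gq σ (y - z)

/-- `Φ⁺(y) = E[V·1_{V>y}]`. -/
noncomputable def Phip {Ω : Type*} [MeasurableSpace Ω] (P : Measure Ω) (V : Ω → ℝ) (y : ℝ) : ℝ :=
  ∫ ω in {ω | V ω > y}, V ω ∂P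

/-- `Π⁺(y) = P(V > y)`. -/
noncomputable def Pip {Ω : Type*} [MeasurableSpace Ω] (P : Measure Ω) (V : Ω → ℝ) (y : ℝ) : ℝ :=
  (P {ω | V ω > y}).toReal

/-- `Φ⁻(y) = E[V·1_{V≤y}]`. -/
noncomputable def Phim {Ω : Type*} [MeasurableSpace Ω] (P : Measure Ω) (V : Ω → ℝ) (y : ℝ) : ℝ :=
  ∫ ω in {ω | V ω ≤ y}, V ω ∂P

/-- `Π⁻(y) = P(V ≤ y)`. -/
noncomputable def Pim {Ω : Type*} [MeasurableSpace Ω] (P : Measure Ω) (V : Ω → ℝ) (y : ℝ) : ℝ :=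
  (P {ω | V ω ≤ y}).toReal

/-- `Ψ⁺ = Φ⁺/Π⁺`. -/
noncomputable def Psip {Ω : Type*} [MeasurableSpace Ω] (P : Measure Ω) (V : Ω → ℝ) (y : ℝ) : ℝ :=
  Phip P V y / Pip P V y

/-- `Ψ⁻ = Φ⁻/Π⁻`. -/
noncomputable def Psim {Ω : Type*} [MeasurableSpace Ω] (P : Measure Ω) (V : Ω → ℝ) (y : ℝ) : ℝ :=
  Phim P V y / Pim P V y

/-- `φ⁺_g`. -/
noncomputable def phip {Ω : Type*} [MeasurableSpace Ω] (P : Measure Ω) (V : Ω → ℝ)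
    (σ : ℝ) (g : ℝ → ℝ) (x : ℝ) : ℝ :=
  (∫ z, Phip P V (g z) * gq σ (x - z)) / (∫ z, Pip P V (g z) * gq σ (x - z))

/-- `φ⁻_g`. -/
noncomputable def phim {Ω : Type*} [MeasurableSpace Ω] (P : Measure Ω) (V : Ω → ℝ)
    (σ : ℝ) (g : ℝ → ℝ) (x : ℝ) : ℝ :=
  (∫ z, Phim P V (g z) * gq σ (x - z)) / (∫ z, Pim P V (g z) * gq σ (x - z))

/-- `φ_g`, equal to `φ⁺_g` on `[0,∞)` and `φ⁻_g` on `(−∞,0)`. -/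
noncomputable def phig {Ω : Type*} [MeasurableSpace Ω] (P : Measure Ω) (V : Ω → ℝ)
    (σ : ℝ) (g : ℝ → ℝ) (x : ℝ) : ℝ :=
  if 0 ≤ x then phip P V σ g x else phim P V σ g x

/-- The interior of the support of the law of `V` is `(m, M)` (with `V` bounded). -/
def SuppIoo {Ω : Type*} [MeasurableSpace Ω] (P : Measure Ω) (V : Ω → ℝ) (m M : ℝ) : Prop :=
  m < M ∧ (∀ᵐ ω ∂P, V ω ∈ Set.Icc m M) ∧
    (∀ y < M, 0 < P {ω | V ω > y}) ∧ (∀ y, m < y → 0 < P {ω | V ω ≤ y})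

/-- Equation (E). -/
def SolvesE {Ω : Type*} [MeasurableSpace Ω] (P : Measure Ω) (V : Ω → ℝ)
    (σ : ℝ) (N : ℕ) (F : ℝ → ℝ) : Prop :=
  ∀ x : ℝ, F x =
    ∫ z, ((1 / (N:ℝ)) * gq σ (x - z) + (((N:ℝ) - 1) / (N:ℝ)) * gqbar σ x z) * phig P V σ F z

/-- Equation (E∞). -/
def SolvesEInf {Ω : Type*} [MeasurableSpace Ω] (P : Measure Ω) (V : Ω → ℝ)
    (σ : ℝ) (F : ℝ → ℝ) : Prop :=
  (∀ x : ℝ, x ≠ 0 →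
    F x = (1 / x) * ∫ y in (0:ℝ)..x, ∫ z, gq σ (y - z) * phig P V σ F z) ∧
  F 0 = ∫ z, gq σ z * phig P V σ F z

/-!
Every nondecreasing solution of (E) or (E∞) is a mixture `θ · (q * φ) + (1 - θ) · mean(q * φ)` of
Gaussian convolutions of a function `φ` with values in `[m, M]`, where `θ = 1 / N` or `θ = 0`. Such
mixtures are Lipschitz with a constant independent of `θ`, so by Arzelà–Ascoli the `F_N` stay in a
compact set. Since `φ ≤ E[V] < M` on `(-∞, 0)` and `φ ≥ E[V] > m` on `[0, ∞)`, cluster points still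
take values in the open interval `(m, M)`; dominated convergence shows that they solve (E∞), and
uniqueness there leaves only one of them.

The limit has range `(m, M)`: a supremum `L < M` would satisfy `L = Ψ⁺(L) > L`, and symmetrically
for the infimum. Hence `X_N = F_N⁻¹(v)` stays bounded, and for a common Lipschitz constant `K` the
profit is at most `K X_N² / (N + 1)`, because `∫₀¹ (1 - y) y^(N-1) dy = 1 / (N (N + 1))`.
-/

open ProbabilityTheory
open scoped Topology NNReal ENNReal Interval

section Integral

variable {α : Type*} [MeasurableSpace α] {μ : Measure α} {f g : α → ℝ}

lemma integral_lt_integral_of_ae_le_of_measure_setOfPred_lt_ne_zero (hf : Integrable f μ)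
    (hg : Integrable g μ) (hle : f ≤ᵐ[μ] g) (hlt : μ {x | f x < g x} ≠ 0) :
    ∫ x, f x ∂μ < ∫ x, g x ∂μ := by
  rw [← sub_pos, ← integral_sub hg hf]
  refine (integral_pos_iff_support_of_nonneg_ae ?_ (hg.sub hf)).2
    ((pos_iff_ne_zero.2 hlt).trans_le (measure_mono fun x hx => ?_))
  · filter_upwards [hle] with x hx using sub_nonneg.2 hx
  · exact (sub_pos.2 hx).ne'

lemma lintegral_enorm_comp_sub_sub_comp_sub_le {q q' : ℝ → ℝ} (hq : ∀ z, HasDerivAt q (q' z) z)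
    (hq' : Continuous q') (x y : ℝ) :
    ∫⁻ z, ‖q (x - z) - q (y - z)‖ₑ ≤ edist x y * ∫⁻ z, ‖q' z‖ₑ := by
  have enorm_sub_le (z : ℝ) : ‖q (x - z) - q (y - z)‖ₑ ≤ ∫⁻ s in Ι y x, ‖q' (s - z)‖ₑ := by
    have ftc : q (x - z) - q (y - z) = ∫ s in y..x, q' (s - z) :=
      (intervalIntegral.integral_eq_sub_of_hasDerivAt
        (fun s _ => (hq (s - z)).comp_sub_const s z)
        ((hq'.comp (continuous_sub_right z)).intervalIntegrable y x)).symm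
    rw [ftc, enorm_eq_iff_norm_eq.2 (intervalIntegral.norm_integral_eq_norm_integral_uIoc _)]
    exact enorm_integral_le_lintegral_enorm _
  calc ∫⁻ z, ‖q (x - z) - q (y - z)‖ₑ
      ≤ ∫⁻ z, ∫⁻ s in Ι y x, ‖q' (s - z)‖ₑ := lintegral_mono enorm_sub_le
    _ = ∫⁻ s in Ι y x, ∫⁻ z, ‖q' (s - z)‖ₑ :=
        lintegral_lintegral_swap
          (hq'.comp (continuous_snd.sub continuous_fst)).enorm.measurable.aemeasurable
    _ = ∫⁻ _ in Ι y x, ∫⁻ z, ‖q' z‖ₑ := by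
        simp_rw [lintegral_sub_left_eq_self (fun z => ‖q' z‖ₑ)]
    _ = edist x y * ∫⁻ z, ‖q' z‖ₑ := by
        rw [setLIntegral_const, uIoc, Real.volume_Ioc, max_sub_min_eq_abs, mul_comm,
          edist_dist, Real.dist_eq]

end Integral

section Continuity

lemma continuous_of_dist_le_mul_dist {X Y Z : Type*} [TopologicalSpace X] [PseudoMetricSpace Y]
    [PseudoMetricSpace Z] {A : X → Y} {B : X → Z} {C : ℝ} (hB : Continuous B)
    (hAB : ∀ x y, dist (A x) (A y) ≤ C * dist (B x) (B y)) : Continuous A := by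
  refine continuous_iff_continuousAt.2 fun y => tendsto_iff_dist_tendsto_zero.2 ?_
  refine squeeze_zero (fun _ => dist_nonneg) (fun x => hAB x y) ?_
  simpa using (tendsto_iff_dist_tendsto_zero.1 (hB.tendsto y)).const_mul C

lemma isCompact_setOfPred_lipschitzWith_forall_mem {X Y : Type*} [PseudoMetricSpace X]
    [PseudoMetricSpace Y] [T2Space Y] (K : ℝ≥0) {s : Set Y} (hs : IsCompact s) :
    IsCompact {f : C(X, Y) | LipschitzWith K f ∧ ∀ x, f x ∈ s} := by
  refine ArzelaAscoli.isCompact_of_equicontinuous _ ?_ ?_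
  · have image_eq : ContinuousMap.toFun '' {f : C(X, Y) | LipschitzWith K f ∧ ∀ x, f x ∈ s} =
        univ.pi (fun _ => s) ∩ {f : X → Y | LipschitzWith K f} := by
      ext f
      constructor
      · rintro ⟨f, ⟨hK, hmem⟩, rfl⟩
        exact ⟨fun x _ => hmem x, hK⟩
      · rintro ⟨hmem, hK⟩
        exact ⟨⟨f, hK.continuous⟩, ⟨hK, fun x => hmem x (mem_univ x)⟩, rfl⟩
    rw [image_eq]
    exact (isCompact_univ_pi fun _ => hs).inter_right (isClosed_setOfPred_lipschitzWith K)
  · exact (LipschitzWith.uniformEquicontinuous _ K fun f => f.2.1).equicontinuous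

end Continuity

section GaussianMean

/-- Mean of `f` under the normal law with mean `y` and variance `σ²`, that is, the convolution of
`f` with the kernel `gq σ`. -/
noncomputable def gaussMean (σ : ℝ) (f : ℝ → ℝ) (y : ℝ) : ℝ :=
  ∫ z, f z ∂gaussianReal y (σ ^ 2).toNNReal

variable {σ C : ℝ} {f g : ℝ → ℝ}

lemma gq_sub_eq_gaussianPDFReal (hσ : 0 < σ) (y z : ℝ) :
    gq σ (y - z) = gaussianPDFReal y (σ ^ 2).toNNReal z := by
  rw [gq, gaussianPDFReal, Real.coe_toNNReal _ (sq_nonneg σ), mul_comm (2 * Real.pi),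
    Real.sqrt_mul (sq_nonneg σ), Real.sqrt_sq hσ.le, sub_sq_comm, div_eq_inv_mul]

lemma integral_gq_mul (hσ : 0 < σ) (f : ℝ → ℝ) (y : ℝ) :
    ∫ z, gq σ (y - z) * f z = gaussMean σ f y := by
  simp_rw [gaussMean, gq_sub_eq_gaussianPDFReal hσ, ← smul_eq_mul]
  exact (integral_gaussianReal_eq_integral_smul
    (Real.toNNReal_pos.2 (sq_pos_of_pos hσ)).ne').symm

lemma continuous_gq (σ : ℝ) : Continuous (gq σ) := by
  unfold gq
  fun_prop

lemma integrable_gq_sub (hσ : 0 < σ) (y : ℝ) : Integrable fun z => gq σ (y - z) := by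
  simp_rw [gq_sub_eq_gaussianPDFReal hσ]
  exact integrable_gaussianPDFReal y _

lemma integrable_gq_mul (hσ : 0 < σ) (hf : Measurable f) (hC : ∀ z, |f z| ≤ C) (y : ℝ) :
    Integrable fun z => gq σ (y - z) * f z :=
  (integrable_gq_sub hσ y).mul_bdd hf.aestronglyMeasurable (.of_forall hC)

lemma hasDerivAt_gq (σ z : ℝ) : HasDerivAt (gq σ) (-(z / σ ^ 2) * gq σ z) z := by
  have exponent : HasDerivAt (fun z : ℝ => -(z ^ 2) / (2 * σ ^ 2)) (-(z / σ ^ 2)) z := by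
    refine (((hasDerivAt_pow 2 z).neg.div_const (2 * σ ^ 2))).congr_deriv ?_
    rw [neg_div, mul_div_mul_comm]
    simp
  exact (exponent.exp.div_const _).congr_deriv (by rw [gq]; ring)

lemma lintegral_enorm_deriv_gq_ne_top (hσ : 0 < σ) :
    ∫⁻ z, ‖-(z / σ ^ 2) * gq σ z‖ₑ ≠ ∞ := by
  have integrable_deriv : Integrable fun z => -(z / σ ^ 2) * gq σ z := by
    refine ((integrable_mul_exp_neg_mul_sq (b := 1 / (2 * σ ^ 2)) (by positivity)).const_mul
      (-(1 / σ ^ 2) / (σ * √(2 * Real.pi)))).congr (.of_forall fun z => ?_)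
    simp only [gq]
    rw [show -(1 / (2 * σ ^ 2)) * z ^ 2 = -(z ^ 2) / (2 * σ ^ 2) by ring]
    ring
  exact integrable_deriv.2.ne

/-- The `L¹` norm of the derivative of `gq σ`: a Lipschitz constant of `gaussMean σ f` whenever
`|f| ≤ 1`. -/
noncomputable def gaussLip (σ : ℝ) : ℝ≥0 := (∫⁻ z, ‖-(z / σ ^ 2) * gq σ z‖ₑ).toNNReal

lemma lipschitzWith_gaussMean (hσ : 0 < σ) {C : ℝ≥0} (hf : Measurable f) (hC : ∀ z, |f z| ≤ C) :
    LipschitzWith (gaussLip σ * C) (gaussMean σ f) := by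
  intro x y
  have hq' : Continuous fun z => -(z / σ ^ 2) * gq σ z :=
    (continuous_id.div_const _).neg.mul (continuous_gq σ)
  calc edist (gaussMean σ f x) (gaussMean σ f y)
      = ‖∫ z, (gq σ (x - z) - gq σ (y - z)) * f z‖ₑ := by
        simp_rw [sub_mul]
        rw [integral_sub (integrable_gq_mul hσ hf hC x) (integrable_gq_mul hσ hf hC y),
          integral_gq_mul hσ, integral_gq_mul hσ, edist_eq_enorm_sub]
    _ ≤ ∫⁻ z, ‖gq σ (x - z) - gq σ (y - z)‖ₑ * C := by
        refine (enorm_integral_le_lintegral_enorm _).trans (lintegral_mono fun z => ?_)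
        rw [enorm_mul]
        gcongr
        exact enorm_le_coe.2 (hC z)
    _ ≤ edist x y * (∫⁻ z, ‖-(z / σ ^ 2) * gq σ z‖ₑ) * C := by
        rw [lintegral_mul_const' _ _ ENNReal.coe_ne_top]
        gcongr
        exact lintegral_enorm_comp_sub_sub_comp_sub_le (hasDerivAt_gq σ) hq' x y
    _ = (gaussLip σ * C : ℝ≥0) * edist x y := by
        rw [gaussLip, ENNReal.coe_mul, ENNReal.coe_toNNReal (lintegral_enorm_deriv_gq_ne_top hσ),
          mul_comm (edist x y), mul_right_comm]

lemma gaussMean_mono (hf : Measurable f) (hfC : ∀ z, |f z| ≤ C) (hg : Measurable g) {D : ℝ}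
    (hgD : ∀ z, |g z| ≤ D) (hfg : ∀ z, f z ≤ g z) (y : ℝ) : gaussMean σ f y ≤ gaussMean σ g y :=
  integral_mono (.of_bound hf.aestronglyMeasurable C (.of_forall hfC))
    (.of_bound hg.aestronglyMeasurable D (.of_forall hgD)) hfg

lemma abs_gaussMean_le (hC : ∀ z, |f z| ≤ C) (y : ℝ) : |gaussMean σ f y| ≤ C := by
  simpa [gaussMean] using norm_integral_le_of_norm_le_const (f := f)
    (μ := gaussianReal y (σ ^ 2).toNNReal) (.of_forall hC)

lemma gaussMean_pos (hf : Measurable f) (hC : ∀ z, |f z| ≤ C) (hpos : ∀ z, 0 < f z) (y : ℝ) :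
    0 < gaussMean σ f y := by
  obtain ⟨z, hz⟩ := exists_le_integral (μ := gaussianReal y (σ ^ 2).toNNReal)
    (.of_bound hf.aestronglyMeasurable C (.of_forall hC))
  exact (hpos z).trans_le hz

lemma tendsto_gaussMean {ι : Type*} {l : Filter ι} [l.IsCountablyGenerated] {u : ι → ℝ → ℝ}
    (hu : ∀ i, Measurable (u i)) (hC : ∀ i z, |u i z| ≤ C)
    (hlim : ∀ z, Tendsto (fun i => u i z) l (𝓝 (f z))) (y : ℝ) :
    Tendsto (fun i => gaussMean σ (u i) y) l (𝓝 (gaussMean σ f y)) :=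
  tendsto_integral_filter_of_norm_le_const (.of_forall fun i => (hu i).aestronglyMeasurable)
    ⟨C, .of_forall fun i => .of_forall (hC i)⟩ (.of_forall hlim)

lemma tendsto_gaussMean_of_tendsto {l : Filter ℝ} [l.IsCountablyGenerated] {L : ℝ}
    (hl : ∀ c, Tendsto (· + c) l l) (hf : Measurable f) (hC : ∀ z, |f z| ≤ C)
    (hlim : Tendsto f l (𝓝 L)) : Tendsto (gaussMean σ f) l (𝓝 L) := by
  have gaussMean_eq (y : ℝ) :
      gaussMean σ f y = ∫ z, f (y + z) ∂gaussianReal 0 (σ ^ 2).toNNReal := by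
    rw [← integral_map (φ := (y + ·)) (by fun_prop) hf.aestronglyMeasurable,
      gaussianReal_map_const_add, zero_add, gaussMean]
  have integral_const_eq : ∫ _, L ∂gaussianReal 0 (σ ^ 2).toNNReal = L := by simp
  rw [funext gaussMean_eq, ← integral_const_eq]
  exact tendsto_integral_filter_of_norm_le_const
    (.of_forall fun y => (hf.comp (measurable_const_add y)).aestronglyMeasurable)
    ⟨C, .of_forall fun y => .of_forall fun z => hC (y + z)⟩
    (.of_forall fun z => hlim.comp (hl z))

end GaussianMean

section Jump

/-- The two-valued function equal to `a` on `(-∞, 0)` and to `b` on `[0, ∞)`; such functions bound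
`phig P V σ g` from both sides, uniformly in `g`. -/
noncomputable def jump (a b : ℝ) (x : ℝ) : ℝ := if 0 ≤ x then b else a

variable {a b : ℝ}

lemma measurable_jump : Measurable (jump a b) :=
  Measurable.ite measurableSet_Ici measurable_const measurable_const

lemma jump_mem_Icc (hab : a ≤ b) (x : ℝ) : jump a b x ∈ Icc a b := by
  rw [jump]
  split_ifs
  exacts [right_mem_Icc.2 hab, left_mem_Icc.2 hab]

lemma tendsto_jump {ι : Type*} {l : Filter ι} {u v : ι → ℝ} (hu : Tendsto u l (𝓝 a))
    (hv : Tendsto v l (𝓝 b)) (x : ℝ) :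
    Tendsto (fun i => jump (u i) (v i) x) l (𝓝 (jump a b x)) := by
  simp only [jump]
  split_ifs
  exacts [hv, hu]

lemma gaussMean_jump_mem_Ioo {σ : ℝ} (hσ : 0 < σ) (hab : a < b) (y : ℝ) :
    gaussMean σ (jump a b) y ∈ Ioo a b := by
  set μ := gaussianReal y (σ ^ 2).toNNReal
  have volume_ac : volume ≪ μ :=
    gaussianReal_absolutelyContinuous' y (Real.toNNReal_pos.2 (sq_pos_of_pos hσ)).ne'
  have integrable_jump : Integrable (jump a b) μ :=
    .of_mem_Icc a b measurable_jump.aemeasurable (.of_forall (jump_mem_Icc hab.le))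
  have integral_const_eq (c : ℝ) : ∫ _, c ∂μ = c := by simp
  constructor
  · refine (integral_const_eq a).symm.trans_lt
      (integral_lt_integral_of_ae_le_of_measure_setOfPred_lt_ne_zero (integrable_const a)
        integrable_jump (.of_forall fun z => (jump_mem_Icc hab.le z).1) fun h => ?_)
    have ici_subset : Ici (0 : ℝ) ⊆ {z | a < jump a b z} := fun z hz => by
      simpa [jump, mem_Ici.1 hz] using hab
    simpa using volume_ac (measure_mono_null ici_subset h)
  · refine (integral_lt_integral_of_ae_le_of_measure_setOfPred_lt_ne_zero integrable_jump
      (integrable_const b) (.of_forall fun z => (jump_mem_Icc hab.le z).2) fun h => ?_).trans_eq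
      (integral_const_eq b)
    have iio_subset : Iio (0 : ℝ) ⊆ {z | jump a b z < b} := fun z hz => by
      simpa [jump, (mem_Iio.1 hz).not_ge] using hab
    simpa using volume_ac (measure_mono_null iio_subset h)

end Jump

section SegmentMean

/-- Mean value of `h` over the segment between `0` and `x`, so that `gqbar σ x z` is the mean of
`y ↦ gq σ (y - z)`. Integrating over `t` in `[0, 1]` covers `x = 0` without a case distinction. -/
noncomputable def segmentMean (h : ℝ → ℝ) (x : ℝ) : ℝ := ∫ t : unitInterval, h (x * t)

variable {h k : ℝ → ℝ} {C : ℝ}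

lemma segmentMean_eq_intervalIntegral (h : ℝ → ℝ) (x : ℝ) :
    segmentMean h x = ∫ t in (0 : ℝ)..1, h (x * t) := by
  rw [intervalIntegral.integral_of_le zero_le_one, ← integral_Icc_eq_integral_Ioc,
    ← integral_subtype measurableSet_Icc, segmentMean]

lemma segmentMean_zero (h : ℝ → ℝ) : segmentMean h 0 = h 0 := by simp [segmentMean]

lemma segmentMean_of_ne_zero (h : ℝ → ℝ) {x : ℝ} (hx : x ≠ 0) :
    segmentMean h x = (1 / x) * ∫ y in (0 : ℝ)..x, h y := by
  rw [segmentMean_eq_intervalIntegral, intervalIntegral.integral_comp_mul_left h hx, mul_zero,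
    mul_one, smul_eq_mul, one_div]

lemma integrable_comp_mul_unitInterval (hh : Continuous h) (x : ℝ) :
    Integrable fun t : unitInterval => h (x * t) :=
  (hh.comp (by fun_prop)).integrable_of_hasCompactSupport (.of_compactSpace _)

lemma segmentMean_mono (hh : Continuous h) (hk : Continuous k) (hhk : ∀ y, h y ≤ k y) (x : ℝ) :
    segmentMean h x ≤ segmentMean k x :=
  integral_mono (integrable_comp_mul_unitInterval hh x) (integrable_comp_mul_unitInterval hk x)
    fun t => hhk (x * t)

lemma segmentMean_mem_Ioo {a b : ℝ} (hh : Continuous h) (hmem : ∀ y, h y ∈ Ioo a b) (x : ℝ) :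
    segmentMean h x ∈ Ioo a b := by
  obtain ⟨s, hs⟩ := exists_le_integral (integrable_comp_mul_unitInterval hh x)
  obtain ⟨t, ht⟩ := exists_integral_le (integrable_comp_mul_unitInterval hh x)
  exact ⟨(hmem _).1.trans_le hs, ht.trans_lt (hmem _).2⟩

lemma lipschitzWith_segmentMean {K : ℝ≥0} (hh : LipschitzWith K h) :
    LipschitzWith K (segmentMean h) := by
  refine .of_dist_le_mul fun x y => ?_
  have dist_le (t : unitInterval) : ‖h (x * t) - h (y * t)‖ ≤ K * dist x y := by
    rw [← dist_eq_norm]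
    refine (hh.dist_le_mul _ _).trans ?_
    rw [Real.dist_eq, Real.dist_eq, ← sub_mul, abs_mul, abs_of_nonneg t.2.1]
    gcongr
    exact mul_le_of_le_one_right (abs_nonneg _) t.2.2
  rw [dist_eq_norm, segmentMean, segmentMean,
    ← integral_sub (integrable_comp_mul_unitInterval hh.continuous x)
      (integrable_comp_mul_unitInterval hh.continuous y)]
  simpa using norm_integral_le_of_norm_le_const (μ := (volume : Measure unitInterval))
    (.of_forall dist_le)

lemma tendsto_segmentMean {ι : Type*} {l : Filter ι} [l.IsCountablyGenerated] {u : ι → ℝ → ℝ}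
    (hu : ∀ i, Continuous (u i)) (hC : ∀ i y, |u i y| ≤ C)
    (hlim : ∀ y, Tendsto (fun i => u i y) l (𝓝 (h y))) (x : ℝ) :
    Tendsto (fun i => segmentMean (u i) x) l (𝓝 (segmentMean h x)) :=
  tendsto_integral_filter_of_norm_le_const
    (.of_forall fun i => (integrable_comp_mul_unitInterval (hu i) x).1)
    ⟨C, .of_forall fun i => .of_forall fun t => hC i (x * t)⟩
    (.of_forall fun t => hlim (x * t))

lemma tendsto_segmentMean_of_tendsto {l : Filter ℝ} [l.IsCountablyGenerated] {L : ℝ}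
    (hl : ∀ t > 0, Tendsto (· * t) l l) (hh : Continuous h) (hC : ∀ y, |h y| ≤ C)
    (hlim : Tendsto h l (𝓝 L)) : Tendsto (segmentMean h) l (𝓝 L) := by
  have integral_const_eq : ∫ _ : unitInterval, L = L := by simp
  rw [← integral_const_eq]
  refine tendsto_integral_filter_of_norm_le_const
    (.of_forall fun x => (integrable_comp_mul_unitInterval hh x).1)
    ⟨C, .of_forall fun x => .of_forall fun t => hC (x * t)⟩ ?_
  filter_upwards [(volume : Measure unitInterval).ae_ne 0] with t ht
  exact hlim.comp (hl t (unitInterval.pos_iff_ne_zero.2 ht))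

lemma gqbar_eq_segmentMean (σ x z : ℝ) :
    gqbar σ x z = segmentMean (fun y => gq σ (y - z)) x := by
  rw [gqbar]
  split_ifs with hx
  · rw [hx, segmentMean_zero]
    simp [gq]
  · exact (segmentMean_of_ne_zero _ hx).symm

end SegmentMean

section Fubini

variable {σ C : ℝ} {f : ℝ → ℝ}

lemma integrable_gq_mul_prod (hσ : 0 < σ) (hf : Measurable f) (hC : ∀ z, |f z| ≤ C) (x : ℝ) :
    Integrable (fun p : unitInterval × ℝ => gq σ (x * p.1 - p.2) * f p.2)
      (volume.prod volume) := by
  have measurable_gq : Measurable fun p : unitInterval × ℝ => gq σ (x * p.1 - p.2) :=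
    ((continuous_gq σ).comp (by fun_prop)).measurable
  have integrable_gq : Integrable (fun p : unitInterval × ℝ => gq σ (x * p.1 - p.2))
      (volume.prod volume) := by
    rw [integrable_prod_iff measurable_gq.aestronglyMeasurable]
    refine ⟨.of_forall fun t => integrable_gq_sub hσ (x * t), ?_⟩
    have integral_norm_eq (t : unitInterval) : ∫ z, ‖gq σ (x * t - z)‖ = 1 := by
      simp_rw [gq_sub_eq_gaussianPDFReal hσ, Real.norm_of_nonneg (gaussianPDFReal_nonneg _ _ _)]
      exact integral_gaussianPDFReal_eq_one _ (Real.toNNReal_pos.2 (sq_pos_of_pos hσ)).ne'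
    simp_rw [integral_norm_eq]
    exact integrable_const 1
  exact integrable_gq.mul_bdd (hf.comp measurable_snd).aestronglyMeasurable
    (.of_forall fun p => hC p.2)

lemma gqbar_mul_eq_integral (σ x z c : ℝ) :
    gqbar σ x z * c = ∫ t : unitInterval, gq σ (x * t - z) * c := by
  rw [gqbar_eq_segmentMean, segmentMean, integral_mul_const]

lemma integrable_gqbar_mul (hσ : 0 < σ) (hf : Measurable f) (hC : ∀ z, |f z| ≤ C) (x : ℝ) :
    Integrable fun z => gqbar σ x z * f z := by
  simp_rw [gqbar_mul_eq_integral]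
  exact (integrable_gq_mul_prod hσ hf hC x).integral_prod_right

lemma integral_gqbar_mul (hσ : 0 < σ) (hf : Measurable f) (hC : ∀ z, |f z| ≤ C) (x : ℝ) :
    ∫ z, gqbar σ x z * f z = segmentMean (gaussMean σ f) x := by
  simp_rw [gqbar_mul_eq_integral, segmentMean, ← integral_gq_mul hσ]
  exact (integral_integral_swap (integrable_gq_mul_prod hσ hf hC x)).symm

end Fubini

section MixedMean

/-- The averaging operator of the equilibrium equations: `θ = 1 / N` gives (E) with parameter `N`
and `θ = 0` gives (E∞). -/
noncomputable def mixedMean (σ θ : ℝ) (f : ℝ → ℝ) (x : ℝ) : ℝ :=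
  θ * gaussMean σ f x + (1 - θ) * segmentMean (gaussMean σ f) x

variable {σ θ C : ℝ} {f g : ℝ → ℝ}

lemma continuous_gaussMean (hσ : 0 < σ) (hf : Measurable f) (hC : ∀ z, |f z| ≤ C) :
    Continuous (gaussMean σ f) :=
  (lipschitzWith_gaussMean hσ hf fun z => (hC z).trans (Real.le_coe_toNNReal C)).continuous

lemma integral_kernel_mul (hσ : 0 < σ) (hf : Measurable f) (hC : ∀ z, |f z| ≤ C) (θ x : ℝ) :
    ∫ z, (θ * gq σ (x - z) + (1 - θ) * gqbar σ x z) * f z = mixedMean σ θ f x := by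
  simp_rw [add_mul, mul_assoc]
  rw [integral_add ((integrable_gq_mul hσ hf hC x).const_mul θ)
    ((integrable_gqbar_mul hσ hf hC x).const_mul (1 - θ)), integral_const_mul, integral_const_mul,
    integral_gq_mul hσ, integral_gqbar_mul hσ hf hC, mixedMean]

lemma mixedMean_mono (hσ : 0 < σ) (hθ : θ ∈ Icc (0 : ℝ) 1) (hf : Measurable f)
    (hfC : ∀ z, |f z| ≤ C) (hg : Measurable g) {D : ℝ} (hgD : ∀ z, |g z| ≤ D)
    (hfg : ∀ z, f z ≤ g z) (x : ℝ) : mixedMean σ θ f x ≤ mixedMean σ θ g x := by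
  have gaussMean_le := gaussMean_mono (σ := σ) hf hfC hg hgD hfg
  exact add_le_add (mul_le_mul_of_nonneg_left (gaussMean_le x) hθ.1)
    (mul_le_mul_of_nonneg_left (segmentMean_mono (continuous_gaussMean hσ hf hfC)
      (continuous_gaussMean hσ hg hgD) gaussMean_le x) (sub_nonneg.2 hθ.2))

lemma lipschitzWith_mixedMean (hσ : 0 < σ) (hθ : θ ∈ Icc (0 : ℝ) 1) {C : ℝ≥0}
    (hf : Measurable f) (hC : ∀ z, |f z| ≤ C) :
    LipschitzWith (gaussLip σ * C) (mixedMean σ θ f) := by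
  have gaussMean_lip := lipschitzWith_gaussMean hσ hf hC
  have segmentMean_lip := lipschitzWith_segmentMean gaussMean_lip
  have dist_mul_left {c : ℝ} (hc : 0 ≤ c) (a b : ℝ) : dist (c * a) (c * b) = c * dist a b := by
    rw [← smul_eq_mul, ← smul_eq_mul, dist_smul₀, Real.norm_of_nonneg hc]
  refine .of_dist_le_mul fun x y => ?_
  calc dist (mixedMean σ θ f x) (mixedMean σ θ f y)
      ≤ θ * dist (gaussMean σ f x) (gaussMean σ f y) +
          (1 - θ) * dist (segmentMean (gaussMean σ f) x) (segmentMean (gaussMean σ f) y) := by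
        rw [← dist_mul_left hθ.1, ← dist_mul_left (sub_nonneg.2 hθ.2)]
        exact dist_add_add_le _ _ _ _
    _ ≤ θ * ((gaussLip σ * C : ℝ≥0) * dist x y) +
          (1 - θ) * ((gaussLip σ * C : ℝ≥0) * dist x y) :=
        add_le_add (mul_le_mul_of_nonneg_left (gaussMean_lip.dist_le_mul x y) hθ.1)
          (mul_le_mul_of_nonneg_left (segmentMean_lip.dist_le_mul x y) (sub_nonneg.2 hθ.2))
    _ = (gaussLip σ * C : ℝ≥0) * dist x y := by ring

lemma tendsto_mixedMean (hσ : 0 < σ) {ι : Type*} {l : Filter ι} [l.IsCountablyGenerated]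
    {τ : ι → ℝ} {u : ι → ℝ → ℝ} (hτ : Tendsto τ l (𝓝 θ)) (hu : ∀ i, Measurable (u i))
    (hC : ∀ i z, |u i z| ≤ C) (hlim : ∀ z, Tendsto (fun i => u i z) l (𝓝 (f z))) (x : ℝ) :
    Tendsto (fun i => mixedMean σ (τ i) (u i) x) l (𝓝 (mixedMean σ θ f x)) := by
  have gaussMean_lim := tendsto_gaussMean (σ := σ) hu hC hlim
  exact (hτ.mul (gaussMean_lim x)).add ((hτ.const_sub 1).mul
    (tendsto_segmentMean (fun i => continuous_gaussMean hσ (hu i) (hC i))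
      (fun i y => abs_gaussMean_le (hC i) y) gaussMean_lim x))

lemma tendsto_mixedMean_of_tendsto (hσ : 0 < σ) {l : Filter ℝ} [l.IsCountablyGenerated] {L : ℝ}
    (hadd : ∀ c, Tendsto (· + c) l l) (hmul : ∀ t > 0, Tendsto (· * t) l l) (hf : Measurable f)
    (hC : ∀ z, |f z| ≤ C) (hlim : Tendsto f l (𝓝 L)) : Tendsto (mixedMean σ θ f) l (𝓝 L) := by
  have gaussMean_lim : Tendsto (gaussMean σ f) l (𝓝 L) :=
    tendsto_gaussMean_of_tendsto hadd hf hC hlim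
  have segmentMean_lim := tendsto_segmentMean_of_tendsto hmul (continuous_gaussMean hσ hf hC)
    (abs_gaussMean_le hC) gaussMean_lim
  have weights_sum : θ * L + (1 - θ) * L = L := by ring
  rw [← weights_sum]
  exact (gaussMean_lim.const_mul θ).add (segmentMean_lim.const_mul (1 - θ))

lemma mixedMean_jump_mem_Ioo (hσ : 0 < σ) (hθ : θ ∈ Icc (0 : ℝ) 1) {a b : ℝ} (hab : a < b)
    (x : ℝ) : mixedMean σ θ (jump a b) x ∈ Ioo a b := by
  have gaussMean_mem := gaussMean_jump_mem_Ioo hσ hab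
  have segmentMean_mem := segmentMean_mem_Ioo (continuous_gaussMean hσ measurable_jump fun z =>
    abs_le_max_abs_abs (jump_mem_Icc hab.le z).1 (jump_mem_Icc hab.le z).2) gaussMean_mem x
  exact convex_Ioo a b (gaussMean_mem x) segmentMean_mem hθ.1 (sub_nonneg.2 hθ.2)
    (add_sub_cancel θ 1)

end MixedMean

section MomentPair

/-- Axioms shared by the pairs `(Phip, Pip)` and `(Phim, Pim)`: a truncated first moment `A` and the
corresponding probability `B`, with conditional means `A / B` between `a` and `b`. -/
structure IsMomentPair (A B : ℝ → ℝ) (a b : ℝ) : Prop where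
  continuous_num : Continuous A
  continuous_den : Continuous B
  den_mem : ∀ y, B y ∈ Icc (0 : ℝ) 1
  num_mem : ∀ y, A y ∈ Icc (a * B y) (b * B y)

/-- Quotient of the Gaussian means of `A ∘ g` and `B ∘ g`; `phip` and `phim` are its two instances.
It takes the junk value `0` where the denominator vanishes. -/
noncomputable def gaussRatio (σ : ℝ) (A B g : ℝ → ℝ) (x : ℝ) : ℝ :=
  gaussMean σ (fun z => A (g z)) x / gaussMean σ (fun z => B (g z)) x

namespace IsMomentPair

variable {A B : ℝ → ℝ} {a b σ : ℝ} {g : ℝ → ℝ}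

lemma abs_num_le (h : IsMomentPair A B a b) (y : ℝ) : |A y| ≤ max |a| |b| := by
  obtain ⟨den_nonneg, den_le_one⟩ := h.den_mem y
  calc |A y| ≤ max |a * B y| |b * B y| := abs_le_max_abs_abs (h.num_mem y).1 (h.num_mem y).2
    _ = max |a| |b| * B y := by
      rw [abs_mul, abs_mul, abs_of_nonneg den_nonneg, max_mul_of_nonneg _ _ den_nonneg]
    _ ≤ max |a| |b| := mul_le_of_le_one_right (le_max_of_le_left (abs_nonneg a)) den_le_one

lemma abs_den_le (h : IsMomentPair A B a b) (y : ℝ) : |B y| ≤ 1 :=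
  abs_le.2 ⟨by linarith [(h.den_mem y).1], (h.den_mem y).2⟩

lemma measurable_num_comp (h : IsMomentPair A B a b) (hg : Measurable g) :
    Measurable fun z => A (g z) := h.continuous_num.measurable.comp hg

lemma measurable_den_comp (h : IsMomentPair A B a b) (hg : Measurable g) :
    Measurable fun z => B (g z) := h.continuous_den.measurable.comp hg

lemma gaussMean_den_pos (h : IsMomentPair A B a b) (hg : Measurable g) (hpos : ∀ z, 0 < B (g z))
    (x : ℝ) : 0 < gaussMean σ (fun z => B (g z)) x :=
  gaussMean_pos (h.measurable_den_comp hg) (fun z => h.abs_den_le (g z)) hpos x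

lemma measurable_gaussRatio (h : IsMomentPair A B a b) (hσ : 0 < σ) (hg : Measurable g) :
    Measurable (gaussRatio σ A B g) :=
  (continuous_gaussMean hσ (h.measurable_num_comp hg) fun z => h.abs_num_le (g z)).measurable.div
    (continuous_gaussMean hσ (h.measurable_den_comp hg) fun z => h.abs_den_le (g z)).measurable

lemma gaussRatio_mem_Icc (h : IsMomentPair A B a b) (hg : Measurable g)
    (hpos : ∀ z, 0 < B (g z)) (x : ℝ) : gaussRatio σ A B g x ∈ Icc a b := by
  have measurable_mul (c : ℝ) : Measurable fun z => c * B (g z) :=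
    (h.measurable_den_comp hg).const_mul c
  have abs_mul_le (c z : ℝ) : |c * B (g z)| ≤ |c| := by
    rw [abs_mul]
    exact mul_le_of_le_one_right (abs_nonneg c) (h.abs_den_le (g z))
  have gaussMean_mul (c : ℝ) :
      gaussMean σ (fun z => c * B (g z)) x = c * gaussMean σ (fun z => B (g z)) x :=
    integral_const_mul c _
  have den_pos := h.gaussMean_den_pos (σ := σ) hg hpos x
  rw [gaussRatio, mem_Icc, le_div_iff₀ den_pos, div_le_iff₀ den_pos, ← gaussMean_mul,
    ← gaussMean_mul]
  exact ⟨gaussMean_mono (measurable_mul a) (abs_mul_le a) (h.measurable_num_comp hg)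
      (fun z => h.abs_num_le (g z)) (fun z => (h.num_mem (g z)).1) x,
    gaussMean_mono (h.measurable_num_comp hg) (fun z => h.abs_num_le (g z)) (measurable_mul b)
      (abs_mul_le b) (fun z => (h.num_mem (g z)).2) x⟩

lemma tendsto_gaussRatio (h : IsMomentPair A B a b) {ι : Type*} {l : Filter ι}
    [l.IsCountablyGenerated] {u : ι → ℝ → ℝ} (hu : ∀ i, Measurable (u i)) (hg : Measurable g)
    (hpos : ∀ z, 0 < B (g z)) (hlim : ∀ z, Tendsto (fun i => u i z) l (𝓝 (g z))) (x : ℝ) :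
    Tendsto (fun i => gaussRatio σ A B (u i) x) l (𝓝 (gaussRatio σ A B g x)) :=
  (tendsto_gaussMean (fun i => h.measurable_num_comp (hu i)) (fun _ _ => h.abs_num_le _)
    (fun z => (h.continuous_num.tendsto _).comp (hlim z)) x).div
    (tendsto_gaussMean (fun i => h.measurable_den_comp (hu i)) (fun _ _ => h.abs_den_le _)
      (fun z => (h.continuous_den.tendsto _).comp (hlim z)) x)
    (h.gaussMean_den_pos hg hpos x).ne'

lemma tendsto_gaussRatio_of_tendsto (h : IsMomentPair A B a b) {l : Filter ℝ}
    [l.IsCountablyGenerated] {L : ℝ} (hl : ∀ c, Tendsto (· + c) l l) (hg : Measurable g)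
    (hL : B L ≠ 0) (hlim : Tendsto g l (𝓝 L)) :
    Tendsto (gaussRatio σ A B g) l (𝓝 (A L / B L)) :=
  (tendsto_gaussMean_of_tendsto hl (h.measurable_num_comp hg) (fun _ => h.abs_num_le _)
    ((h.continuous_num.tendsto L).comp hlim)).div
    (tendsto_gaussMean_of_tendsto hl (h.measurable_den_comp hg) (fun _ => h.abs_den_le _)
      ((h.continuous_den.tendsto L).comp hlim)) hL

end IsMomentPair

end MomentPair

section Law

lemma compl_setOfPred_gt {Ω : Type*} (V : Ω → ℝ) (y : ℝ) : {ω | V ω > y}ᶜ = {ω | V ω ≤ y} := by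
  ext ω
  simp

variable {Ω : Type*} [MeasurableSpace Ω] {P : Measure Ω} {V : Ω → ℝ} {m M : ℝ}

lemma mul_measureReal_le_setIntegral {s : Set Ω} (hs : MeasurableSet s) (hμs : P s ≠ ∞)
    (hV : IntegrableOn V s P) {c : ℝ} (hc : ∀ᵐ ω ∂P, ω ∈ s → c ≤ V ω) :
    c * P.real s ≤ ∫ ω in s, V ω ∂P := by
  rw [mul_comm, ← smul_eq_mul, ← setIntegral_const]
  exact setIntegral_mono_on_ae (integrableOn_const hμs) hV hs hc

lemma setIntegral_le_mul_measureReal {s : Set Ω} (hs : MeasurableSet s) (hμs : P s ≠ ∞)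
    (hV : IntegrableOn V s P) {c : ℝ} (hc : ∀ᵐ ω ∂P, ω ∈ s → V ω ≤ c) :
    ∫ ω in s, V ω ∂P ≤ c * P.real s := by
  rw [mul_comm, ← smul_eq_mul, ← setIntegral_const]
  exact setIntegral_mono_on_ae hV (integrableOn_const hμs) hs hc

lemma measurableSet_gt (hV : Measurable V) (y : ℝ) : MeasurableSet {ω | V ω > y} :=
  measurableSet_lt measurable_const hV

lemma Phip_add_Phim (hV : Measurable V) (hint : Integrable V P) (y : ℝ) :
    Phip P V y + Phim P V y = ∫ ω, V ω ∂P := by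
  rw [Phim, ← compl_setOfPred_gt]
  exact integral_add_compl (measurableSet_gt hV y) hint

lemma SuppIoo.measure_lt_ne_zero (hs : SuppIoo P V m M) {y : ℝ} (hy : m < y) :
    P {ω | V ω < y} ≠ 0 := by
  obtain ⟨c, hmc, hcy⟩ := exists_between hy
  exact ((hs.2.2.2 c hmc).trans_le (measure_mono fun ω hω => lt_of_le_of_lt hω hcy)).ne'

section IsFiniteMeasure

variable [IsFiniteMeasure P]

lemma mul_Pip_le_Phip (hV : Measurable V) (hint : Integrable V P) (y : ℝ) :
    y * Pip P V y ≤ Phip P V y :=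
  mul_measureReal_le_setIntegral (measurableSet_gt hV y) (measure_ne_top _ _) hint.integrableOn
    (.of_forall fun _ hω => le_of_lt hω)

lemma Phim_le_mul_Pim (hV : Measurable V) (hint : Integrable V P) (y : ℝ) :
    Phim P V y ≤ y * Pim P V y :=
  setIntegral_le_mul_measureReal (measurableSet_le hV measurable_const) (measure_ne_top _ _)
    hint.integrableOn (.of_forall fun _ => id)

namespace SuppIoo

lemma integrable (hs : SuppIoo P V m M) (hV : Measurable V) : Integrable V P :=
  .of_mem_Icc m M hV.aemeasurable hs.2.1

lemma Pip_pos (hs : SuppIoo P V m M) {y : ℝ} (hy : y < M) : 0 < Pip P V y :=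
  ENNReal.toReal_pos (hs.2.2.1 y hy).ne' (measure_ne_top _ _)

lemma Pim_pos (hs : SuppIoo P V m M) {y : ℝ} (hy : m < y) : 0 < Pim P V y :=
  ENNReal.toReal_pos (hs.2.2.2 y hy).ne' (measure_ne_top _ _)

lemma lt_Psip (hs : SuppIoo P V m M) (hV : Measurable V) {y : ℝ} (hy : y < M) :
    y < Psip P V y := by
  rw [Psip, lt_div_iff₀ (hs.Pip_pos hy), mul_comm]
  refine (setIntegral_const y).symm.trans_lt
    (integral_lt_integral_of_ae_le_of_measure_setOfPred_lt_ne_zero (integrable_const y)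
      (hs.integrable hV).integrableOn ?_ ?_)
  · exact ae_restrict_of_forall_mem (measurableSet_gt hV y) fun ω hω => le_of_lt hω
  · rw [Measure.restrict_apply_self]
    exact (hs.2.2.1 y hy).ne'

lemma Psim_lt (hs : SuppIoo P V m M) (hV : Measurable V) {y : ℝ} (hy : m < y) :
    Psim P V y < y := by
  have measurableSet_le_y : MeasurableSet {ω | V ω ≤ y} := measurableSet_le hV measurable_const
  have lt_subset : {ω | V ω < y} ⊆ {ω | V ω ≤ y} := fun ω hω => le_of_lt (a := V ω) hω
  rw [Psim, div_lt_iff₀ (hs.Pim_pos hy), mul_comm]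
  refine (integral_lt_integral_of_ae_le_of_measure_setOfPred_lt_ne_zero
    (hs.integrable hV).integrableOn (integrable_const y) ?_ ?_).trans_eq (setIntegral_const y)
  · exact ae_restrict_of_forall_mem measurableSet_le_y fun ω hω => hω
  · rw [Measure.restrict_eq_self P lt_subset]
    exact hs.measure_lt_ne_zero hy

lemma abs_Phip_sub_le (hs : SuppIoo P V m M) (hV : Measurable V) {y z : ℝ} (hyz : y ≤ z) :
    |Phip P V y - Phip P V z| ≤ max |m| |M| * |Pip P V y - Pip P V z| := by
  have gt_subset : {ω | V ω > z} ⊆ {ω | V ω > y} := fun ω hω => lt_of_le_of_lt hyz hω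
  have Phip_sub : Phip P V y - Phip P V z = ∫ ω in {ω | V ω > y} \ {ω | V ω > z}, V ω ∂P :=
    (setIntegral_sdiff (measurableSet_gt hV z) (hs.integrable hV).integrableOn gt_subset).symm
  have Pip_sub : Pip P V y - Pip P V z = P.real ({ω | V ω > y} \ {ω | V ω > z}) :=
    (measureReal_sdiff gt_subset (measurableSet_gt hV z)).symm
  rw [Phip_sub, Pip_sub, abs_of_nonneg measureReal_nonneg, ← Real.norm_eq_abs (integral _ _)]
  refine norm_setIntegral_le_of_norm_le_const_ae' (measure_lt_top P _) ?_
  filter_upwards [hs.2.1] with ω hω _ using abs_le_max_abs_abs hω.1 hω.2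

lemma continuous_Phip (hs : SuppIoo P V m M) (hV : Measurable V) (hcont : Continuous (Pip P V)) :
    Continuous (Phip P V) := by
  refine continuous_of_dist_le_mul_dist (C := max |m| |M|) hcont fun y z => ?_
  rcases le_total y z with hyz | hzy
  · exact hs.abs_Phip_sub_le hV hyz
  · rw [dist_comm, dist_comm (Pip P V y)]
    exact hs.abs_Phip_sub_le hV hzy

end SuppIoo

end IsFiniteMeasure

variable [IsProbabilityMeasure P]

lemma Pip_mem_Icc (V : Ω → ℝ) (y : ℝ) : Pip P V y ∈ Icc (0 : ℝ) 1 :=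
  ⟨measureReal_nonneg, measureReal_le_one⟩

lemma Pim_mem_Icc (V : Ω → ℝ) (y : ℝ) : Pim P V y ∈ Icc (0 : ℝ) 1 :=
  ⟨measureReal_nonneg, measureReal_le_one⟩

lemma Pip_add_Pim (hV : Measurable V) (y : ℝ) : Pip P V y + Pim P V y = 1 := by
  rw [Pim, ← compl_setOfPred_gt]
  exact probReal_add_probReal_compl (measurableSet_gt hV y)

lemma mean_mul_Pip_le_Phip (hV : Measurable V) (hint : Integrable V P) (y : ℝ) :
    (∫ ω, V ω ∂P) * Pip P V y ≤ Phip P V y := by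
  rcases le_total (∫ ω, V ω ∂P) y with mean_le | le_mean
  · exact (mul_le_mul_of_nonneg_right mean_le (Pip_mem_Icc V y).1).trans
      (mul_Pip_le_Phip hV hint y)
  · have Pip_eq : Pip P V y = 1 - Pim P V y := eq_sub_of_add_eq (Pip_add_Pim hV y)
    have Phim_le : Phim P V y ≤ (∫ ω, V ω ∂P) * Pim P V y :=
      (Phim_le_mul_Pim hV hint y).trans
        (mul_le_mul_of_nonneg_right le_mean (Pim_mem_Icc V y).1)
    rw [Pip_eq]
    linarith [Phip_add_Phim hV hint y]

lemma Phim_le_mean_mul_Pim (hV : Measurable V) (hint : Integrable V P) (y : ℝ) :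
    Phim P V y ≤ (∫ ω, V ω ∂P) * Pim P V y := by
  have Pim_eq : Pim P V y = 1 - Pip P V y := eq_sub_of_add_eq' (Pip_add_Pim hV y)
  rw [Pim_eq]
  linarith [mean_mul_Pip_le_Phip hV hint y, Phip_add_Phim hV hint y]

namespace SuppIoo

lemma mean_mem_Ioo (hs : SuppIoo P V m M) (hV : Measurable V) : ∫ ω, V ω ∂P ∈ Ioo m M := by
  have integral_const_eq (c : ℝ) : ∫ _, c ∂P = c := by simp
  constructor
  · exact (integral_const_eq m).symm.trans_lt
      (integral_lt_integral_of_ae_le_of_measure_setOfPred_lt_ne_zero (integrable_const m)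
        (hs.integrable hV) (hs.2.1.mono fun _ => And.left) (hs.2.2.1 m hs.1).ne')
  · exact (integral_lt_integral_of_ae_le_of_measure_setOfPred_lt_ne_zero (hs.integrable hV)
      (integrable_const M) (hs.2.1.mono fun _ => And.right)
      (hs.measure_lt_ne_zero hs.1)).trans_eq (integral_const_eq M)

lemma isMomentPair_upper (hs : SuppIoo P V m M) (hV : Measurable V)
    (hcont : Continuous (Pip P V)) :
    IsMomentPair (Phip P V) (Pip P V) (∫ ω, V ω ∂P) M where
  continuous_num := hs.continuous_Phip hV hcont
  continuous_den := hcont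
  den_mem := Pip_mem_Icc V
  num_mem y := ⟨mean_mul_Pip_le_Phip hV (hs.integrable hV) y,
    setIntegral_le_mul_measureReal (measurableSet_gt hV y) (measure_ne_top _ _)
      (hs.integrable hV).integrableOn (hs.2.1.mono fun _ hω _ => hω.2)⟩

lemma isMomentPair_lower (hs : SuppIoo P V m M) (hV : Measurable V)
    (hcont : Continuous (Pip P V)) :
    IsMomentPair (Phim P V) (Pim P V) m (∫ ω, V ω ∂P) where
  continuous_num := by
    rw [funext fun y => eq_sub_of_add_eq' (Phip_add_Phim hV (hs.integrable hV) y)]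
    exact continuous_const.sub (hs.continuous_Phip hV hcont)
  continuous_den := by
    rw [funext fun y => eq_sub_of_add_eq' (Pip_add_Pim (P := P) hV y)]
    exact continuous_const.sub hcont
  den_mem := Pim_mem_Icc V
  num_mem y := ⟨mul_measureReal_le_setIntegral (measurableSet_le hV measurable_const)
      (measure_ne_top _ _) (hs.integrable hV).integrableOn (hs.2.1.mono fun _ hω _ => hω.1),
    Phim_le_mean_mul_Pim hV (hs.integrable hV) y⟩

end SuppIoo

end Law

section Equilibrium

variable {Ω : Type*} [MeasurableSpace Ω] {P : Measure Ω} {V : Ω → ℝ} {m M σ θ : ℝ} {g : ℝ → ℝ}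

lemma phig_eq_jump (hσ : 0 < σ) (g : ℝ → ℝ) (x : ℝ) :
    phig P V σ g x =
      jump (gaussRatio σ (Phim P V) (Pim P V) g x) (gaussRatio σ (Phip P V) (Pip P V) g x) x := by
  simp only [phig, phip, phim, jump, gaussRatio, ← integral_gq_mul hσ, mul_comm (gq σ _)]

namespace SuppIoo

variable [IsProbabilityMeasure P]

lemma measurable_phig (hs : SuppIoo P V m M) (hV : Measurable V) (hcont : Continuous (Pip P V))
    (hσ : 0 < σ) (hg : Measurable g) : Measurable (phig P V σ g) := by
  rw [funext (phig_eq_jump hσ g)]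
  exact .ite measurableSet_Ici ((hs.isMomentPair_upper hV hcont).measurable_gaussRatio hσ hg)
    ((hs.isMomentPair_lower hV hcont).measurable_gaussRatio hσ hg)

lemma phig_mem_Icc (hs : SuppIoo P V m M) (hV : Measurable V) (hcont : Continuous (Pip P V))
    (hσ : 0 < σ) (hg : Measurable g) (hmem : ∀ z, g z ∈ Ioo m M) (x : ℝ) :
    phig P V σ g x ∈ Icc (jump m (∫ ω, V ω ∂P) x) (jump (∫ ω, V ω ∂P) M x) := by
  rw [phig_eq_jump hσ]
  simp only [jump]
  split_ifs
  · exact (hs.isMomentPair_upper hV hcont).gaussRatio_mem_Icc hg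
      (fun z => hs.Pip_pos (hmem z).2) x
  · exact (hs.isMomentPair_lower hV hcont).gaussRatio_mem_Icc hg
      (fun z => hs.Pim_pos (hmem z).1) x

lemma abs_phig_le (hs : SuppIoo P V m M) (hV : Measurable V) (hcont : Continuous (Pip P V))
    (hσ : 0 < σ) (hg : Measurable g) (hmem : ∀ z, g z ∈ Ioo m M) (x : ℝ) :
    |phig P V σ g x| ≤ max |m| |M| := by
  obtain ⟨m_lt_mean, mean_lt_M⟩ := hs.mean_mem_Ioo hV
  obtain ⟨lower, upper⟩ := hs.phig_mem_Icc hV hcont hσ hg hmem x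
  exact abs_le_max_abs_abs ((jump_mem_Icc m_lt_mean.le x).1.trans lower)
    (upper.trans (jump_mem_Icc mean_lt_M.le x).2)

lemma tendsto_phig (hs : SuppIoo P V m M) (hV : Measurable V) (hcont : Continuous (Pip P V))
    (hσ : 0 < σ) {ι : Type*} {l : Filter ι} [l.IsCountablyGenerated] {u : ι → ℝ → ℝ}
    (hu : ∀ i, Measurable (u i)) (hg : Measurable g) (hmem : ∀ z, g z ∈ Ioo m M)
    (hlim : ∀ z, Tendsto (fun i => u i z) l (𝓝 (g z))) (x : ℝ) :
    Tendsto (fun i => phig P V σ (u i) x) l (𝓝 (phig P V σ g x)) := by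
  simp_rw [phig_eq_jump hσ]
  exact tendsto_jump
    ((hs.isMomentPair_lower hV hcont).tendsto_gaussRatio hu hg (fun z => hs.Pim_pos (hmem z).1)
      hlim x)
    ((hs.isMomentPair_upper hV hcont).tendsto_gaussRatio hu hg (fun z => hs.Pip_pos (hmem z).2)
      hlim x) x

lemma tendsto_phig_atTop (hs : SuppIoo P V m M) (hV : Measurable V)
    (hcont : Continuous (Pip P V)) (hσ : 0 < σ) (hg : Measurable g) {L : ℝ} (hL : L < M)
    (hlim : Tendsto g atTop (𝓝 L)) : Tendsto (phig P V σ g) atTop (𝓝 (Psip P V L)) := by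
  refine ((hs.isMomentPair_upper hV hcont).tendsto_gaussRatio_of_tendsto
    (σ := σ) (fun c => tendsto_atTop_add_const_right _ c tendsto_id) hg (hs.Pip_pos hL).ne'
    hlim).congr' ?_
  filter_upwards [eventually_ge_atTop 0] with x hx
  rw [phig_eq_jump hσ, jump, if_pos hx]

lemma tendsto_phig_atBot (hs : SuppIoo P V m M) (hV : Measurable V)
    (hcont : Continuous (Pip P V)) (hσ : 0 < σ) (hg : Measurable g) {L : ℝ} (hL : m < L)
    (hlim : Tendsto g atBot (𝓝 L)) : Tendsto (phig P V σ g) atBot (𝓝 (Psim P V L)) := by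
  refine ((hs.isMomentPair_lower hV hcont).tendsto_gaussRatio_of_tendsto
    (σ := σ) (fun c => tendsto_atBot_add_const_right _ c tendsto_id) hg (hs.Pim_pos hL).ne'
    hlim).congr' ?_
  filter_upwards [eventually_lt_atBot 0] with x hx
  rw [phig_eq_jump hσ, jump, if_neg hx.not_ge]

end SuppIoo

/-- Continuous nondecreasing `(m, M)`-valued solutions of the equation with weight `θ`. The weight
`1 / N` stands for (E) with parameter `N`, the weight `0` for (E∞); treating `θ` as a real parameter
makes the passage to the limit a continuity statement. -/
structure IsEquilibrium (P : Measure Ω) (V : Ω → ℝ) (m M σ θ : ℝ) (g : ℝ → ℝ) : Prop where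
  continuous : Continuous g
  monotone : Monotone g
  mem_Ioo : ∀ x, g x ∈ Ioo m M
  eq_mixedMean : ∀ x, g x = mixedMean σ θ (phig P V σ g) x

lemma solvesEInf_iff (hσ : 0 < σ) :
    SolvesEInf P V σ g ↔ ∀ x, g x = mixedMean σ 0 (phig P V σ g) x := by
  have mixedMean_eq (x : ℝ) :
      mixedMean σ 0 (phig P V σ g) x = segmentMean (gaussMean σ (phig P V σ g)) x := by
    simp [mixedMean]
  have gaussMean_zero : ∫ z, gq σ z * phig P V σ g z = gaussMean σ (phig P V σ g) 0 := by
    simp [← integral_gq_mul hσ, gq]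
  simp_rw [SolvesEInf, mixedMean_eq, integral_gq_mul hσ, gaussMean_zero]
  constructor
  · rintro ⟨eq_of_ne_zero, eq_zero⟩ x
    rcases eq_or_ne x 0 with rfl | hx
    · rw [segmentMean_zero, eq_zero]
    · rw [segmentMean_of_ne_zero _ hx, eq_of_ne_zero x hx]
  · intro h
    exact ⟨fun x hx => by rw [h, segmentMean_of_ne_zero _ hx], by rw [h, segmentMean_zero]⟩

lemma IsEquilibrium.solvesEInf (hσ : 0 < σ) (h : IsEquilibrium P V m M σ 0 g) :
    SolvesEInf P V σ g := (solvesEInf_iff hσ).2 h.eq_mixedMean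

variable [IsProbabilityMeasure P]

lemma SolvesE.isEquilibrium (hs : SuppIoo P V m M) (hV : Measurable V)
    (hcont : Continuous (Pip P V)) (hσ : 0 < σ) {N : ℕ} (hN : N ≠ 0) (hg : Continuous g)
    (hmono : Monotone g) (hmem : ∀ x, g x ∈ Ioo m M) (h : SolvesE P V σ N g) :
    IsEquilibrium P V m M σ (1 / N) g where
  continuous := hg
  monotone := hmono
  mem_Ioo := hmem
  eq_mixedMean x := by
    have weight_eq : ((N : ℝ) - 1) / N = 1 - 1 / N := by field_simp
    rw [h x, ← integral_kernel_mul hσ (hs.measurable_phig hV hcont hσ hg.measurable)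
      (hs.abs_phig_le hV hcont hσ hg.measurable hmem), weight_eq]

namespace IsEquilibrium

lemma lipschitzWith (h : IsEquilibrium P V m M σ θ g) (hs : SuppIoo P V m M) (hV : Measurable V)
    (hcont : Continuous (Pip P V)) (hσ : 0 < σ) (hθ : θ ∈ Icc (0 : ℝ) 1) :
    LipschitzWith (gaussLip σ * max ‖m‖₊ ‖M‖₊) g := by
  rw [funext h.eq_mixedMean]
  exact lipschitzWith_mixedMean hσ hθ (hs.measurable_phig hV hcont hσ h.continuous.measurable)
    (hs.abs_phig_le hV hcont hσ h.continuous.measurable h.mem_Ioo)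

lemma mem_Icc_mixedMean_jump (h : IsEquilibrium P V m M σ θ g) (hs : SuppIoo P V m M)
    (hV : Measurable V) (hcont : Continuous (Pip P V)) (hσ : 0 < σ) (hθ : θ ∈ Icc (0 : ℝ) 1)
    (x : ℝ) : g x ∈ Icc (mixedMean σ θ (jump m (∫ ω, V ω ∂P)) x)
      (mixedMean σ θ (jump (∫ ω, V ω ∂P) M) x) := by
  obtain ⟨m_lt_mean, mean_lt_M⟩ := hs.mean_mem_Ioo hV
  have abs_jump_le {a b : ℝ} (hab : a ≤ b) (z : ℝ) : |jump a b z| ≤ max |a| |b| :=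
    abs_le_max_abs_abs (jump_mem_Icc hab z).1 (jump_mem_Icc hab z).2
  have phig_mem := hs.phig_mem_Icc hV hcont hσ h.continuous.measurable h.mem_Ioo
  have phig_meas := hs.measurable_phig hV hcont hσ h.continuous.measurable
  have abs_phig_le := hs.abs_phig_le hV hcont hσ h.continuous.measurable h.mem_Ioo
  rw [h.eq_mixedMean x]
  exact ⟨mixedMean_mono hσ hθ measurable_jump (abs_jump_le m_lt_mean.le) phig_meas abs_phig_le
      (fun z => (phig_mem z).1) x,
    mixedMean_mono hσ hθ phig_meas abs_phig_le measurable_jump (abs_jump_le mean_lt_M.le)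
      (fun z => (phig_mem z).2) x⟩

section Limit

variable {ι : Type*} {l : Filter ι} [l.IsCountablyGenerated] [l.NeBot] {τ : ι → ℝ}
  {u : ι → ℝ → ℝ}

lemma mem_Ioo_of_tendsto (hu : ∀ i, IsEquilibrium P V m M σ (τ i) (u i))
    (hs : SuppIoo P V m M) (hV : Measurable V) (hcont : Continuous (Pip P V)) (hσ : 0 < σ)
    (hτ : ∀ i, τ i ∈ Icc (0 : ℝ) 1) (hlim : Tendsto τ l (𝓝 θ)) {x y : ℝ}
    (hux : Tendsto (fun i => u i x) l (𝓝 y)) : y ∈ Ioo m M := by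
  obtain ⟨m_lt_mean, mean_lt_M⟩ := hs.mean_mem_Ioo hV
  have hθ : θ ∈ Icc (0 : ℝ) 1 := isClosed_Icc.mem_of_tendsto hlim (.of_forall hτ)
  have bounds (i : ι) := (hu i).mem_Icc_mixedMean_jump hs hV hcont hσ (hτ i) x
  have bound_lim {a b : ℝ} (hab : a ≤ b) : Tendsto (fun i => mixedMean σ (τ i) (jump a b) x) l
      (𝓝 (mixedMean σ θ (jump a b) x)) :=
    tendsto_mixedMean hσ hlim (fun _ => measurable_jump)
      (fun _ z => abs_le_max_abs_abs (jump_mem_Icc hab z).1 (jump_mem_Icc hab z).2)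
      (fun _ => tendsto_const_nhds) x
  exact ⟨(mixedMean_jump_mem_Ioo hσ hθ m_lt_mean x).1.trans_le
      (le_of_tendsto_of_tendsto' (bound_lim m_lt_mean.le) hux fun i => (bounds i).1),
    (le_of_tendsto_of_tendsto' hux (bound_lim mean_lt_M.le) fun i => (bounds i).2).trans_lt
      (mixedMean_jump_mem_Ioo hσ hθ mean_lt_M x).2⟩

lemma of_tendsto (hu : ∀ i, IsEquilibrium P V m M σ (τ i) (u i)) (hs : SuppIoo P V m M)
    (hV : Measurable V) (hcont : Continuous (Pip P V)) (hσ : 0 < σ)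
    (hτ : ∀ i, τ i ∈ Icc (0 : ℝ) 1) (hlim : Tendsto τ l (𝓝 θ)) (hg : Continuous g)
    (hug : ∀ x, Tendsto (fun i => u i x) l (𝓝 (g x))) : IsEquilibrium P V m M σ θ g where
  continuous := hg
  monotone _ _ hxy := le_of_tendsto_of_tendsto' (hug _) (hug _) fun i => (hu i).monotone hxy
  mem_Ioo x := mem_Ioo_of_tendsto hu hs hV hcont hσ hτ hlim (hug x)
  eq_mixedMean x := by
    have u_meas (i : ι) : Measurable (u i) := (hu i).continuous.measurable
    have phig_lim := hs.tendsto_phig hV hcont hσ u_meas hg.measurable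
      (fun x => mem_Ioo_of_tendsto hu hs hV hcont hσ hτ hlim (hug x)) hug
    have mixedMean_lim := tendsto_mixedMean hσ hlim
      (fun i => hs.measurable_phig hV hcont hσ (u_meas i))
      (fun i => hs.abs_phig_le hV hcont hσ (u_meas i) (hu i).mem_Ioo) phig_lim x
    exact tendsto_nhds_unique ((hug x).congr fun i => (hu i).eq_mixedMean x) mixedMean_lim

end Limit

theorem exists_tendsto {τ : ℕ → ℝ} {u : ℕ → ℝ → ℝ}
    (hu : ∀ n, IsEquilibrium P V m M σ (τ n) (u n)) (hs : SuppIoo P V m M) (hV : Measurable V)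
    (hcont : Continuous (Pip P V)) (hσ : 0 < σ) (hτ : ∀ n, τ n ∈ Icc (0 : ℝ) 1)
    (hlim : Tendsto τ atTop (𝓝 θ))
    (huniq : ∀ G H, IsEquilibrium P V m M σ θ G → IsEquilibrium P V m M σ θ H → G = H) :
    ∃ G, IsEquilibrium P V m M σ θ G ∧ ∀ x, Tendsto (fun n => u n x) atTop (𝓝 (G x)) := by
  let U : ℕ → C(ℝ, ℝ) := fun n => ⟨u n, (hu n).continuous⟩
  have compact := isCompact_setOfPred_lipschitzWith_forall_mem (X := ℝ)
    (gaussLip σ * max ‖m‖₊ ‖M‖₊) (isCompact_Icc (a := m) (b := M))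
  have U_mem (n : ℕ) :
      U n ∈ {f : C(ℝ, ℝ) | LipschitzWith (gaussLip σ * max ‖m‖₊ ‖M‖₊) f ∧ ∀ x, f x ∈ Icc m M} :=
    ⟨(hu n).lipschitzWith hs hV hcont hσ (hτ n), fun x => Ioo_subset_Icc_self ((hu n).mem_Ioo x)⟩
  have isEquilibrium_of_mapClusterPt (G : C(ℝ, ℝ)) (hG : MapClusterPt G atTop U) :
      IsEquilibrium P V m M σ θ G := by
    obtain ⟨k, hk, hkG⟩ := hG.tendsto_subseq
    exact of_tendsto (fun n => hu (k n)) hs hV hcont hσ (fun n => hτ (k n))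
      (hlim.comp hk.tendsto_atTop) G.continuous
      fun x => ((continuous_eval_const x).tendsto G).comp hkG
  obtain ⟨G, -, hG⟩ := compact.exists_mapClusterPt (f := atTop) (u := U)
    (tendsto_principal.2 (.of_forall U_mem))
  have U_lim : Tendsto U atTop (𝓝 G) :=
    compact.tendsto_nhds_of_unique_mapClusterPt (.of_forall U_mem) fun H _ hH =>
      DFunLike.coe_injective (huniq H G (isEquilibrium_of_mapClusterPt H hH)
        (isEquilibrium_of_mapClusterPt G hG))
  exact ⟨G, isEquilibrium_of_mapClusterPt G hG,
    fun x => ((continuous_eval_const x).tendsto G).comp U_lim⟩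

lemma exists_gt (h : IsEquilibrium P V m M σ θ g) (hs : SuppIoo P V m M) (hV : Measurable V)
    (hcont : Continuous (Pip P V)) (hσ : 0 < σ) {v : ℝ} (hv : v < M) : ∃ x, v < g x := by
  by_contra! g_le
  have g_lim : Tendsto g atTop (𝓝 (⨆ x, g x)) :=
    tendsto_atTop_ciSup h.monotone ⟨v, forall_mem_range.2 g_le⟩
  have sup_lt : ⨆ x, g x < M := (ciSup_le g_le).trans_lt hv
  have g_meas := h.continuous.measurable
  have mixedMean_lim : Tendsto g atTop (𝓝 (Psip P V (⨆ x, g x))) := by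
    exact (tendsto_mixedMean_of_tendsto hσ (fun c => tendsto_atTop_add_const_right _ c tendsto_id)
      (fun t ht => tendsto_id.atTop_mul_const ht) (hs.measurable_phig hV hcont hσ g_meas)
      (hs.abs_phig_le hV hcont hσ g_meas h.mem_Ioo)
      (hs.tendsto_phig_atTop hV hcont hσ g_meas sup_lt g_lim)).congr
        fun x => (h.eq_mixedMean x).symm
  exact (hs.lt_Psip hV sup_lt).ne (tendsto_nhds_unique g_lim mixedMean_lim)

lemma exists_lt (h : IsEquilibrium P V m M σ θ g) (hs : SuppIoo P V m M) (hV : Measurable V)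
    (hcont : Continuous (Pip P V)) (hσ : 0 < σ) {v : ℝ} (hv : m < v) : ∃ x, g x < v := by
  by_contra! le_g
  have g_lim : Tendsto g atBot (𝓝 (⨅ x, g x)) :=
    tendsto_atBot_ciInf h.monotone ⟨v, forall_mem_range.2 le_g⟩
  have lt_inf : m < ⨅ x, g x := hv.trans_le (le_ciInf le_g)
  have g_meas := h.continuous.measurable
  have mixedMean_lim : Tendsto g atBot (𝓝 (Psim P V (⨅ x, g x))) := by
    exact (tendsto_mixedMean_of_tendsto hσ (fun c => tendsto_atBot_add_const_right _ c tendsto_id)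
      (fun t ht => tendsto_id.atBot_mul_const ht) (hs.measurable_phig hV hcont hσ g_meas)
      (hs.abs_phig_le hV hcont hσ g_meas h.mem_Ioo)
      (hs.tendsto_phig_atBot hV hcont hσ g_meas lt_inf g_lim)).congr
        fun x => (h.eq_mixedMean x).symm
  exact (hs.Psim_lt hV lt_inf).ne (tendsto_nhds_unique mixedMean_lim g_lim)

lemma exists_eventually_abs_le {u : ℕ → ℝ → ℝ} {X : ℕ → ℝ} {v : ℝ}
    (h : IsEquilibrium P V m M σ θ g) (hs : SuppIoo P V m M) (hV : Measurable V)
    (hcont : Continuous (Pip P V)) (hσ : 0 < σ) (hu : ∀ n, Monotone (u n))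
    (hug : ∀ x, Tendsto (fun n => u n x) atTop (𝓝 (g x))) (hv : v ∈ Ioo m M)
    (hX : ∀ n, u n (X n) = v) : ∃ R, ∀ᶠ n in atTop, |X n| ≤ R := by
  obtain ⟨a, ha⟩ := h.exists_lt hs hV hcont hσ hv.1
  obtain ⟨b, hb⟩ := h.exists_gt hs hV hcont hσ hv.2
  refine ⟨max |a| |b|, ?_⟩
  filter_upwards [(hug a).eventually_lt_const ha, (hug b).eventually_const_lt hb] with n hna hnb
  rw [← hX n] at hna hnb
  exact abs_le_max_abs_abs ((hu n).reflect_lt hna).le ((hu n).reflect_lt hnb).le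

end IsEquilibrium

end Equilibrium

section Profit

variable {K : ℝ≥0} {f : ℝ → ℝ}

lemma integral_one_sub_mul_pow (n : ℕ) :
    ∫ y in (0 : ℝ)..1, (1 - y) * y ^ n = 1 / ((n + 1) * (n + 2)) := by
  simp_rw [sub_mul, one_mul, ← pow_succ']
  rw [intervalIntegral.integral_sub (intervalIntegral.intervalIntegrable_pow n)
    (intervalIntegral.intervalIntegrable_pow (n + 1)), integral_pow, integral_pow]
  push_cast
  field_simp
  ring

lemma abs_mul_integral_sub_mul_pow_le (hf : LipschitzWith K f) (X : ℝ) (n : ℕ) :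
    |X * (n + 1) * ∫ y in (0 : ℝ)..1, (f X - f (X * y)) * y ^ n| ≤ K * X ^ 2 / (n + 2) := by
  have integrand_le : ∀ y ∈ Ioc (0 : ℝ) 1,
      ‖(f X - f (X * y)) * y ^ n‖ ≤ K * |X| * ((1 - y) * y ^ n) := by
    intro y hy
    have dist_eq : dist X (X * y) = |X| * (1 - y) := by
      rw [Real.dist_eq, ← mul_one_sub, abs_mul, abs_of_nonneg (sub_nonneg.2 hy.2)]
    rw [norm_mul, ← dist_eq_norm, Real.norm_of_nonneg (pow_nonneg hy.1.le n), ← mul_assoc,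
      mul_assoc _ |X|, ← dist_eq]
    exact mul_le_mul_of_nonneg_right (hf.dist_le_mul X (X * y)) (pow_nonneg hy.1.le n)
  have integral_le : |∫ y in (0 : ℝ)..1, (f X - f (X * y)) * y ^ n| ≤
      K * |X| * (1 / ((n + 1) * (n + 2))) := by
    rw [← integral_one_sub_mul_pow, ← intervalIntegral.integral_const_mul]
    exact intervalIntegral.norm_integral_le_of_norm_le zero_le_one (.of_forall integrand_le)
      (Continuous.intervalIntegrable (by fun_prop) 0 1)
  calc |X * (n + 1) * ∫ y in (0 : ℝ)..1, (f X - f (X * y)) * y ^ n|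
      ≤ |X| * (n + 1) * (K * |X| * (1 / ((n + 1) * (n + 2)))) := by
        rw [abs_mul, abs_mul, abs_of_nonneg (by positivity : (0 : ℝ) ≤ n + 1)]
        gcongr
    _ = K * X ^ 2 / (n + 2) := by
        rw [← sq_abs X]
        field_simp

lemma tendsto_mul_integral_sub_mul_pow_zero {u : ℕ → ℝ → ℝ} {X : ℕ → ℝ} {R : ℝ}
    (hu : ∀ n, LipschitzWith K (u n)) (hX : ∀ᶠ n in atTop, |X n| ≤ R) :
    Tendsto (fun n : ℕ => X n * (n + 1) * ∫ y in (0 : ℝ)..1, (u n (X n) - u n (X n * y)) * y ^ n)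
      atTop (𝓝 0) := by
  have bound_lim : Tendsto (fun n : ℕ => K * R ^ 2 / ((n : ℝ) + 2)) atTop (𝓝 0) :=
    (tendsto_atTop_add_const_right _ 2 tendsto_natCast_atTop_atTop).const_div_atTop _
  refine squeeze_zero_norm' ?_ bound_lim
  filter_upwards [hX] with n hn
  refine (abs_mul_integral_sub_mul_pow_le (hu n) (X n) n).trans ?_
  rw [← sq_abs (X n)]
  gcongr

end Profit

theorem stmt10_general {Ω : Type*} [MeasurableSpace Ω] (P : Measure Ω) [IsProbabilityMeasure P]
    (V : Ω → ℝ) (hVmeas : Measurable V) (m M : ℝ) (hsupp : SuppIoo P V m M) (σ : ℝ) (hσ : 0 < σ)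
    (hcont : Continuous (Pip P V)) (F : ℕ → ℝ → ℝ)
    (hFsol : ∀ N : ℕ, 1 ≤ N → Continuous (F N) ∧ Monotone (F N) ∧
      (∀ x, F N x ∈ Ioo m M) ∧ SolvesE P V σ N (F N))
    (hInfuniq : ∀ G H : ℝ → ℝ,
      Continuous G → Monotone G → (∀ x, G x ∈ Ioo m M) → SolvesEInf P V σ G →
      Continuous H → Monotone H → (∀ x, H x ∈ Ioo m M) → SolvesEInf P V σ H → G = H) :
    ∃ Finf : ℝ → ℝ,
      (∀ x : ℝ, Tendsto (fun N : ℕ => F N x) atTop (𝓝 (Finf x))) ∧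
      SolvesEInf P V σ Finf ∧
      (∀ v ∈ Ioo m M, ∀ X : ℕ → ℝ, (∀ N : ℕ, 1 ≤ N → F N (X N) = v) →
        Tendsto (fun N : ℕ => X N * N * ∫ y in (0 : ℝ)..1, (v - F N (X N * y)) * y ^ (N - 1))
          atTop (𝓝 0)) := by
  have equilibrium (n : ℕ) : IsEquilibrium P V m M σ (1 / (n + 1 : ℕ)) (F (n + 1)) :=
    have ⟨F_cont, F_mono, F_mem, F_sol⟩ := hFsol (n + 1) n.succ_pos
    F_sol.isEquilibrium hsupp hVmeas hcont hσ n.succ_ne_zero F_cont F_mono F_mem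
  have weight_mem (n : ℕ) : 1 / ((n + 1 : ℕ) : ℝ) ∈ Icc (0 : ℝ) 1 :=
    ⟨Nat.one_div_cast_nonneg _, sub_nonneg.1 (Nat.one_sub_one_div_cast_nonneg _)⟩
  have weight_lim : Tendsto (fun n : ℕ => 1 / ((n + 1 : ℕ) : ℝ)) atTop (𝓝 0) :=
    (tendsto_add_atTop_iff_nat 1).2 tendsto_one_div_atTop_nhds_zero_nat
  obtain ⟨G, hG, F_lim⟩ := IsEquilibrium.exists_tendsto equilibrium hsupp hVmeas hcont hσ
    weight_mem weight_lim fun G H hG hH =>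
      hInfuniq G H hG.continuous hG.monotone hG.mem_Ioo (hG.solvesEInf hσ)
        hH.continuous hH.monotone hH.mem_Ioo (hH.solvesEInf hσ)
  refine ⟨G, fun x => (tendsto_add_atTop_iff_nat 1).1 (F_lim x), hG.solvesEInf hσ,
    fun v hv X hX => (tendsto_add_atTop_iff_nat 1).1 ?_⟩
  obtain ⟨R, X_le⟩ := hG.exists_eventually_abs_le hsupp hVmeas hcont hσ
    (fun n => (equilibrium n).monotone) F_lim hv fun n => hX (n + 1) n.succ_pos
  have profit_lim := tendsto_mul_integral_sub_mul_pow_zero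
    (fun n => (equilibrium n).lipschitzWith hsupp hVmeas hcont hσ (weight_mem n)) X_le
  simpa only [hX _ (Nat.succ_pos _), Nat.cast_succ, Nat.add_sub_cancel] using profit_lim

/-- If `Π⁺` is continuous, each equation (E) with parameter `N ≥ 1` has a unique
continuous nondecreasing solution `F_N` with values in `(m,M)`, and (E∞) has at most one such
solution, then `F_∞ = lim_N F_N` exists pointwise and solves (E∞); moreover the aggregate expected
profit `π_N(v) = F_N⁻¹(v)·N·∫₀¹ (v − F_N(y·F_N⁻¹(v)))·y^{N−1} dy` tends to `0`. -/
theorem stmt10 {Ω : Type*} [MeasurableSpace Ω] (P : Measure Ω) [IsProbabilityMeasure P]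
    (V : Ω → ℝ) (hVmeas : Measurable V) (hV : Integrable V P)
    (m M : ℝ) (hsupp : SuppIoo P V m M)
    (σ : ℝ) (hσ : 0 < σ)
    (hcont : Continuous (Pip P V))
    (F : ℕ → ℝ → ℝ)
    (hFsol : ∀ N : ℕ, 1 ≤ N → Continuous (F N) ∧ Monotone (F N) ∧
      (∀ x, F N x ∈ Set.Ioo m M) ∧ SolvesE P V σ N (F N))
    (hFuniq : ∀ N : ℕ, 1 ≤ N → ∀ G : ℝ → ℝ, Continuous G → Monotone G →
      (∀ x, G x ∈ Set.Ioo m M) → SolvesE P V σ N G → G = F N)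
    (hInfuniq : ∀ G H : ℝ → ℝ,
      Continuous G → Monotone G → (∀ x, G x ∈ Set.Ioo m M) → SolvesEInf P V σ G →
      Continuous H → Monotone H → (∀ x, H x ∈ Set.Ioo m M) → SolvesEInf P V σ H → G = H) :
    ∃ Finf : ℝ → ℝ,
      (∀ x : ℝ, Tendsto (fun N : ℕ => F N x) atTop (nhds (Finf x))) ∧
      SolvesEInf P V σ Finf ∧
      (∀ v ∈ Set.Ioo m M, ∀ X : ℕ → ℝ, (∀ N : ℕ, 1 ≤ N → F N (X N) = v) →
        Tendsto (fun N : ℕ =>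
            X N * N * ∫ y in (0:ℝ)..1, (v - F N (X N * y)) * y ^ (N - 1))
          atTop (nhds 0)) :=
  stmt10_general P V hVmeas m M hsupp σ hσ hcont F hFsol hInfuniq
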